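/- Let G be a connected graph containing no triangle, no induced cycle of length 5, and no induced cycle of even length at least 6, let v be a vertex of G and (N_0, N_1, …) be the v-levelling. Let h(x) = x/2 − 8 and h^{(j)} denote its j-th iterate. For all positive integers k, ℓ, δ such that χ(N_k) ≥ δ + 1 and h^{(ℓ−1)}(δ) ≥ 18, there exists a rooted PCP of order ℓ in N_k with leftovers at least h^{(ℓ)}(δ). -/

import Mathlib

open SimpleGraph

/-- The chromatic number of `G`, as a natural number. -/
noncomputable def chi {V : Type} (G : SimpleGraph V) : ℕ := G.chromaticNumber.toNat

/-- The chromatic number of the subgraph of `G` induced by the vertex set `A`. -/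
noncomputable def chiSet {V : Type} (G : SimpleGraph V) (A : Set V) : ℕ :=
  (G.induce A).chromaticNumber.toNat

/-- `G` contains no induced cycle of length `n`: there is no graph embedding
(induced-subgraph embedding) of the `n`-cycle into `G`. -/
def NoInducedCycle {V : Type} (G : SimpleGraph V) (n : ℕ) : Prop :=
  IsEmpty (cycleGraph n ↪g G)

/-- The `k`-th level of the `v`-levelling: vertices at distance exactly `k` from `v`. -/
def level {V : Type} (G : SimpleGraph V) (v : V) (k : ℕ) : Set V :=
  {x | G.Reachable v x ∧ G.dist v x = k}

/-- `N(S)`: the set of vertices adjacent to at least one vertex of `S`. -/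
def neighborsOf {V : Type} (G : SimpleGraph V) (S : Set V) : Set V :=
  {x | ∃ s ∈ S, G.Adj s x}

/-- A walk is an induced path: it is a path, and its vertex set induces
no edges other than the path edges. -/
def IsInducedPathW {V : Type} {G : SimpleGraph V} {u w : V} (p : G.Walk u w) : Prop :=
  p.IsPath ∧ ∀ a ∈ p.support, ∀ b ∈ p.support, G.Adj a b → s(a, b) ∈ p.edges

/-- A Parity Changing Path (PCP) of order `ℓ` in `G`: regular blocks `block 0, …, block (ℓ-1)`
(vertex sets of induced subgraphs), a last block `lastBlock`, induced paths `path i` of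
length at least `2` from `y i ∈ block i` to `x i.succ`, with the prescribed shared vertices,
disjointness and edge conditions, an induced odd and an induced even `x i`–`y i` path inside
each regular block, `lastBlock` connected and each regular block `4`-colorable. -/
structure PCP {V : Type} (G : SimpleGraph V) (ℓ : ℕ) where
  block : Fin ℓ → Set V
  lastBlock : Set V
  x : Fin (ℓ + 1) → V
  y : Fin ℓ → V
  path : (i : Fin ℓ) → G.Walk (y i) (x i.succ)
  x_mem : ∀ i : Fin ℓ, x i.castSucc ∈ block i
  y_mem : ∀ i : Fin ℓ, y i ∈ block i
  xlast_mem : x (Fin.last ℓ) ∈ lastBlock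
  path_induced : ∀ i, IsInducedPathW (path i)
  path_length : ∀ i, 2 ≤ (path i).length
  blocks_disjoint : ∀ i j, i ≠ j → Disjoint (block i) (block j)
  block_last_disjoint : ∀ i, Disjoint (block i) lastBlock
  block_path_inter : ∀ i j : Fin ℓ, ∀ w ∈ block i, w ∈ (path j).support →
      (j = i ∧ w = y i) ∨ ((j : ℕ) + 1 = (i : ℕ) ∧ w = x i.castSucc)
  last_path_inter : ∀ j : Fin ℓ, ∀ w ∈ lastBlock, w ∈ (path j).support →
      (j : ℕ) + 1 = ℓ ∧ w = x (Fin.last ℓ)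
  paths_disjoint : ∀ i j : Fin ℓ, i ≠ j → ∀ w,
      w ∈ (path i).support → w ∈ (path j).support → False
  edges_within : ∀ a b : V,
      a ∈ (⋃ i, block i) ∪ lastBlock ∪ (⋃ i, {w | w ∈ (path i).support}) →
      b ∈ (⋃ i, block i) ∪ lastBlock ∪ (⋃ i, {w | w ∈ (path i).support}) →
      G.Adj a b →
      (∃ i, a ∈ block i ∧ b ∈ block i) ∨ (a ∈ lastBlock ∧ b ∈ lastBlock) ∨
        (∃ i, a ∈ (path i).support ∧ b ∈ (path i).support)
  odd_path : ∀ i : Fin ℓ, ∃ p : G.Walk (x i.castSucc) (y i),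
      IsInducedPathW p ∧ (∀ w ∈ p.support, w ∈ block i) ∧ Odd p.length
  even_path : ∀ i : Fin ℓ, ∃ p : G.Walk (x i.castSucc) (y i),
      IsInducedPathW p ∧ (∀ w ∈ p.support, w ∈ block i) ∧ Even p.length
  last_connected : (G.induce lastBlock).Connected
  block_chrom : ∀ i, (G.induce (block i)).chromaticNumber ≤ 4

/-- The origin of a PCP. -/
def PCP.origin {V : Type} {G : SimpleGraph V} {ℓ : ℕ} (P : PCP G ℓ) : V := P.x 0

/-- The vertex set of a PCP. -/
def PCP.support {V : Type} {G : SimpleGraph V} {ℓ : ℕ} (P : PCP G ℓ) : Set V :=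
  (⋃ i, P.block i) ∪ P.lastBlock ∪ (⋃ i, {w | w ∈ (P.path i).support})

/-- The leftovers of a PCP: the chromatic number of its last block. -/
noncomputable def PCP.leftovers {V : Type} {G : SimpleGraph V} {ℓ : ℕ} (P : PCP G ℓ) : ℕ :=
  chiSet G P.lastBlock

/-- A strong PCP: every regular block contains an induced 5-cycle. -/
def PCP.IsStrong {V : Type} {G : SimpleGraph V} {ℓ : ℕ} (P : PCP G ℓ) : Prop :=
  ∀ i : Fin ℓ, ∃ f : cycleGraph 5 ↪g G, ∀ t, f t ∈ P.block i

/-- A PCP lies in the level `N_k` of the `v`-levelling and is rooted there: some vertex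
`u' ∈ N_{k-1}` is adjacent to the origin and to no other vertex of the PCP. -/
def PCP.IsRootedInLevel {V : Type} {G : SimpleGraph V} {ℓ : ℕ} (P : PCP G ℓ)
    (v : V) (k : ℕ) : Prop :=
  P.support ⊆ level G v k ∧
    ∃ u' ∈ level G v (k - 1), G.Adj u' P.origin ∧
      ∀ w ∈ P.support, w ≠ P.origin → ¬ G.Adj u' w
/-!
The `v`-levelling provides the root, and everything else happens inside a connected subset of
`N_k`. Choose a component of `N_k` attaining its chromatic number and a
vertex `u'` of `N_{k-1}` with a neighbour in it. As `N(u')` is independent, deleting it costs one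
colour, and the connected remainder hangs on a single neighbour of `u'` (`pull`). This leaves a
connected set `A` with a chosen vertex `x`, of chromatic number at least `δ`, and the rest of the
argument is carried out inside `A`.

The step that is iterated is `exists_link`. Level `A` by distance from `x`; some level has at
least half of the chromatic number. Take an edge `z z'` in a component of that level, parents
`p`, `p'` of its ends, and shortest paths `R`, `R'` from `x` to `p`, `p'` (`IsFork`). Delete the
neighbourhoods of `p`, `p'`, `z`, `z'` from the component: this costs four colours. The component
`H0` of the remainder with the largest chromatic number is attached to the fork through a vertex
`q` of the same level that sees one of `p`, `p'`, `z`, `z'`. Going to `q` directly, or around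
through the edge `z z'` (or through an edge `p p'`), gives induced paths from `x` to `q` of both
parities (`IsFork.hasBothParities`): a triangle or an induced 5-cycle would otherwise appear. The
fork together with `q` has at most two vertices in each higher level, hence is 4-colourable
(`IsFork.block_colorable`). Applying `pull` twice from `q` yields a path of length 2 into a
connected remainder and costs two more colours, for a total of `χ / 2 - 6 ≥ h(χ)`.

Finally, `PCP.cons` prepends such a link to a parity changing path living in its remainder and
starting where the link ends.
-/

/-! ### Chromatic number of vertex sets -/

section Chromatic

variable {V : Type} {G : SimpleGraph V}

lemma chiSet_le_iff [Finite V] {A : Set V} {n : ℕ} :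
    chiSet G A ≤ n ↔ (G.induce A).Colorable n := by
  have h := colorable_chromaticNumber_of_fintype (G.induce A)
  exact ⟨fun hn => h.mono hn, fun hc => ENat.toNat_le_of_le_natCast hc.chromaticNumber_le⟩

lemma colorable_induce_iff {A : Set V} {n : ℕ} :
    (G.induce A).Colorable n ↔
      ∃ c : V → ℕ, (∀ a ∈ A, c a < n) ∧ ∀ a ∈ A, ∀ b ∈ A, G.Adj a b → c a ≠ c b := by
  classical
  constructor
  · rintro ⟨C⟩
    refine ⟨fun a => if h : a ∈ A then (C ⟨a, h⟩ : ℕ) else 0, ?_, ?_⟩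
    · intro a ha
      simp [ha]
    · intro a ha b hb hab
      simp only [ha, hb, dite_true]
      intro h
      exact C.valid (v := ⟨a, ha⟩) (w := ⟨b, hb⟩) hab (Fin.ext h)
  · rintro ⟨c, hc, hc'⟩
    exact ⟨Coloring.mk (fun a => ⟨c a, hc a a.2⟩)
      (fun {a b} hab h => hc' a a.2 b b.2 hab (Fin.ext_iff.mp h))⟩

lemma chiSet_mono [Finite V] {A B : Set V} (h : A ⊆ B) : chiSet G A ≤ chiSet G B := by
  rw [chiSet_le_iff, colorable_induce_iff]
  obtain ⟨c, hc, hc'⟩ := colorable_induce_iff.mp (chiSet_le_iff.mp (le_refl (chiSet G B)))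
  exact ⟨c, fun a ha => hc a (h ha), fun a ha b hb => hc' a (h ha) b (h hb)⟩

lemma chiSet_le_zero_of_empty [Finite V] {A : Set V} (h : ∀ a, a ∉ A) : chiSet G A ≤ 0 := by
  rw [chiSet_le_iff, colorable_induce_iff]
  exact ⟨fun _ => 0, fun a ha => (h a ha).elim, fun a ha => (h a ha).elim⟩

lemma chiSet_le_one_of_indep [Finite V] {A : Set V} (h : ∀ a ∈ A, ∀ b ∈ A, ¬ G.Adj a b) :
    chiSet G A ≤ 1 := by
  rw [chiSet_le_iff, colorable_induce_iff]
  exact ⟨fun _ => 0, fun _ _ => one_pos, fun a ha b hb hab => (h a ha b hb hab).elim⟩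

lemma not_adj_of_common {a b c : V} (h3 : G.CliqueFree 3) (hab : G.Adj a b) (hac : G.Adj a c) :
    ¬ G.Adj b c := by
  classical
  intro hbc
  exact h3 {a, b, c} (is3Clique_iff.mpr ⟨a, b, c, hab, hac, hbc, rfl⟩)

/-- In a triangle-free graph, deleting one neighbourhood lowers the chromatic number by at
most one, because the neighbourhood is independent. -/
lemma chiSet_le_diff_nbr [Finite V] (h3 : G.CliqueFree 3) (A : Set V) (u : V) :
    chiSet G A ≤ chiSet G {a ∈ A | ¬ G.Adj u a} + 1 := by
  classical
  rw [chiSet_le_iff, colorable_induce_iff]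
  obtain ⟨c, hc, hc'⟩ := colorable_induce_iff.mp
    (chiSet_le_iff.mp (le_refl (chiSet G {a ∈ A | ¬ G.Adj u a})))
  refine ⟨fun a => if G.Adj u a then chiSet G {a ∈ A | ¬ G.Adj u a} else c a, ?_, ?_⟩
  · intro a ha
    by_cases h : G.Adj u a
    · simp [h]
    · have := hc a ⟨ha, h⟩
      simp only [h, if_false]
      omega
  · intro a ha b hb hab
    by_cases h : G.Adj u a <;> by_cases h' : G.Adj u b
    · exact (not_adj_of_common h3 h h' hab).elim
    · have := hc b ⟨hb, h'⟩
      simp only [h, h', if_true, if_false]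
      omega
    · have := hc a ⟨ha, h⟩
      simp only [h, h', if_true, if_false]
      omega
    · simp only [h, h', if_false]
      exact hc' a ⟨ha, h⟩ b ⟨hb, h'⟩ hab

/-- If adjacent vertices of `A` lie in equal or consecutive levels, some level carries at least
half of the chromatic number of `A`: otherwise two disjoint palettes, used on the even and on
the odd levels, would colour `A`. -/
lemma exists_level [Finite V] {A : Set V} {lev : V → ℕ}
    (hlev : ∀ a ∈ A, ∀ b ∈ A, G.Adj a b → lev a ≤ lev b + 1) :
    ∃ d, chiSet G A ≤ 2 * chiSet G {a ∈ A | lev a = d} := by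
  classical
  by_contra! hcon
  set m := (chiSet G A - 1) / 2 with hm
  have hpos : 0 < chiSet G A := lt_of_le_of_lt (Nat.zero_le _) (hcon 0)
  have hle : ∀ d, chiSet G {a ∈ A | lev a = d} ≤ m := fun d => by
    have := hcon d
    omega
  choose c hc hc' using fun d => colorable_induce_iff.mp (chiSet_le_iff.mp (hle d))
  have : chiSet G A ≤ 2 * m := by
    rw [chiSet_le_iff, colorable_induce_iff]
    refine ⟨fun a => 2 * c (lev a) a + lev a % 2, ?_, ?_⟩
    · intro a ha
      have := hc (lev a) a ⟨ha, rfl⟩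
      dsimp only
      omega
    · intro a ha b hb hab h
      dsimp only at h
      have h1 := hlev a ha b hb hab
      have h2 := hlev b hb a ha hab.symm
      have h3 : lev a = lev b := by omega
      have h4 := hc' (lev a) a ⟨ha, rfl⟩ b ⟨hb, h3.symm⟩ hab
      rw [← h3] at h
      omega
  omega

/-- Some connected component `C` of the subgraph induced by `A` attains the chromatic number. -/
lemma exists_component [Finite V] {A : Set V} {n : ℕ} (hn : 0 < n) (hA : n ≤ chiSet G A) :
    ∃ C ⊆ A, (G.induce C).Connected ∧ n ≤ chiSet G C ∧
      ∀ a ∈ A, a ∉ C → ∀ b ∈ C, ¬ G.Adj a b := by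
  have h1 : ¬ (G.induce A).Colorable (n - 1) := by
    rw [← chiSet_le_iff]
    omega
  rw [colorable_iff_forall_connectedComponent] at h1
  push Not at h1
  obtain ⟨c, hc⟩ := h1
  let f : c.toSimpleGraph →g G.induce (Subtype.val '' c.supp) :=
    { toFun := fun a => ⟨a.1.1, a.1, a.2, rfl⟩
      map_rel' := fun h => h }
  refine ⟨Subtype.val '' c.supp, ?_, ?_, ?_, ?_⟩
  · rintro _ ⟨a, _, rfl⟩
    exact a.2
  · refine c.connected_toSimpleGraph.map f ?_
    rintro ⟨_, a, ha, rfl⟩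
    exact ⟨⟨a, ha⟩, rfl⟩
  · by_contra hlt
    have : chiSet G (Subtype.val '' c.supp) ≤ n - 1 := by omega
    rw [chiSet_le_iff] at this
    exact hc (this.of_hom f)
  · rintro a ha hnot _ ⟨b, hb, rfl⟩ hab
    exact hnot ⟨⟨a, ha⟩, c.mem_supp_of_adj_mem_supp hb (by exact hab.symm), rfl⟩

/-- A connected set with a proper nonempty subset has an edge leaving that subset. -/
lemma exists_crossing {A S : Set V} (hA : (G.induce A).Connected) {s t : V} (hs : s ∈ A)
    (hsS : s ∈ S) (ht : t ∈ A) (htS : t ∉ S) :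
    ∃ a ∈ A, ∃ b ∈ A, a ∉ S ∧ b ∈ S ∧ G.Adj a b := by
  obtain ⟨p⟩ := hA.preconnected ⟨s, hs⟩ ⟨t, ht⟩
  obtain ⟨d, _, h1, h2⟩ := p.exists_boundary_dart (Subtype.val ⁻¹' S) hsS htS
  exact ⟨d.snd.1, d.snd.2, d.fst.1, d.fst.2, h2, h1, d.adj.symm⟩

lemma connected_insert {H : Set V} {a b : V} (hH : (G.induce H).Connected) (hb : b ∈ H)
    (hab : G.Adj a b) : (G.induce (insert a H)).Connected := by
  have h1 : (G.induce ({a} : Set V)).Connected := Connected.of_subsingleton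
  exact connected_induce_union h1.preconnected hH.preconnected (Set.mem_singleton a) hb hab

/-- Pulling one step into a connected set: if `q` has a neighbour in `H`, then some neighbour
`a ∈ H` of `q` attaches to a connected `H' ⊆ H` that `q` does not see, at the cost of one
colour. The set `H'` is a component of what remains of `H` after deleting the neighbours of
`q`. -/
lemma pull [Finite V] (h3 : G.CliqueFree 3) {H : Set V} (hH : (G.induce H).Connected)
    {q h : V} (hh : h ∈ H) (hq : G.Adj q h) {n : ℕ} (hn : 0 < n) (hχ : n + 1 ≤ chiSet G H) :
    ∃ a ∈ H, ∃ H' ⊆ H, G.Adj q a ∧ (∀ b ∈ H', ¬ G.Adj q b) ∧ a ∉ H' ∧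
      (∃ b ∈ H', G.Adj a b) ∧ (G.induce H').Connected ∧ n ≤ chiSet G H' := by
  have h1 := chiSet_le_diff_nbr h3 H q
  obtain ⟨C, hCA, hC, hCχ, hCmax⟩ := exists_component hn (by omega : n ≤ chiSet G {a ∈ H | ¬ G.Adj q a})
  obtain ⟨⟨c, hc⟩⟩ := hC.nonempty
  obtain ⟨a, ha, b, hb, haC, hbC, hab⟩ :=
    exists_crossing hH (hCA hc).1 hc hh (fun hhC => (hCA hhC).2 hq)
  refine ⟨a, ha, C, fun x hx => (hCA hx).1, ?_, fun b hb => (hCA hb).2, haC, ⟨b, hbC, hab⟩, hC, hCχ⟩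
  by_contra hqa
  exact hCmax a ⟨ha, hqa⟩ haC b hbC hab

end Chromatic

/-! ### Levellings, geodesics and paths of both parities -/

section Paths

variable {V : Type} {G : SimpleGraph V}

lemma false_of_induced_five (h5 : NoInducedCycle G 5) {a b c d e : V}
    (hab : G.Adj a b) (hbc : G.Adj b c) (hcd : G.Adj c d) (hde : G.Adj d e) (hea : G.Adj e a)
    (hac : ¬ G.Adj a c) (had : ¬ G.Adj a d) (hbd : ¬ G.Adj b d) (hbe : ¬ G.Adj b e)
    (hce : ¬ G.Adj c e) : False := by
  have hca : ¬ G.Adj c a := fun h => hac h.symm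
  have hda : ¬ G.Adj d a := fun h => had h.symm
  have hdb : ¬ G.Adj d b := fun h => hbd h.symm
  have heb : ¬ G.Adj e b := fun h => hbe h.symm
  have hec : ¬ G.Adj e c := fun h => hce h.symm
  have hrel : ∀ i j : Fin 5, G.Adj (![a, b, c, d, e] i) (![a, b, c, d, e] j) ↔
      (cycleGraph 5).Adj i j := by
    intro i j
    fin_cases i <;> fin_cases j <;>
      simp [cycleGraph_adj', hab, hbc, hcd, hde, hea, hab.symm, hbc.symm, hcd.symm, hde.symm,
        hea.symm, hac, had, hbd, hbe, hce, hca, hda, hdb, heb, hec] <;> decide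
  refine h5.false ⟨⟨![a, b, c, d, e], fun i j hij => ?_⟩, hrel _ _⟩
  -- distinct vertices of the 5-cycle have distinct neighbourhoods
  have key : ∀ i j : Fin 5, (∀ t, (cycleGraph 5).Adj i t ↔ (cycleGraph 5).Adj j t) → i = j := by
    decide
  exact key i j fun t => by rw [← hrel, ← hrel, hij]

/-- `S` contains induced paths from `x` to `y` of both parities. -/
def HasBothParities (G : SimpleGraph V) (S : Set V) (x y : V) : Prop :=
  (∃ p : G.Walk x y, IsInducedPathW p ∧ (∀ w ∈ p.support, w ∈ S) ∧ Odd p.length) ∧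
    ∃ p : G.Walk x y, IsInducedPathW p ∧ (∀ w ∈ p.support, w ∈ S) ∧ Even p.length

lemma hasBothParities_of {S : Set V} {x y : V} (p p' : G.Walk x y) (hp : IsInducedPathW p)
    (hp' : IsInducedPathW p') (hS : ∀ w ∈ p.support, w ∈ S) (hS' : ∀ w ∈ p'.support, w ∈ S)
    (h : p'.length % 2 ≠ p.length % 2) : HasBothParities G S x y := by
  rcases Nat.even_or_odd p.length with he | ho
  · refine ⟨⟨p', hp', hS', ?_⟩, p, hp, hS, he⟩
    rw [Nat.odd_iff]
    rw [Nat.even_iff] at he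
    omega
  · refine ⟨⟨p, hp, hS, ho⟩, p', hp', hS', ?_⟩
    rw [Nat.even_iff]
    rw [Nat.odd_iff] at ho
    omega

lemma IsInducedPathW.concat' {x u w : V} {p : G.Walk x u} (hp : IsInducedPathW p)
    (h : G.Adj u w) (hne : ∀ a ∈ p.support, a ≠ w)
    (honly : ∀ a ∈ p.support, G.Adj a w → a = u) : IsInducedPathW (p.concat h) := by
  refine ⟨hp.1.concat (fun hw => hne w hw rfl) h, ?_⟩
  intro a ha b hb hab
  rw [Walk.support_concat, List.mem_append, List.mem_singleton] at ha hb
  rw [Walk.edges_concat, List.concat_eq_append, List.mem_append, List.mem_singleton]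
  rcases ha with ha | rfl <;> rcases hb with hb | rfl
  · exact Or.inl (hp.2 a ha b hb hab)
  · exact Or.inr (by rw [honly a ha hab])
  · exact Or.inr (by rw [honly b hb hab.symm, Sym2.eq_swap])
  · exact (G.irrefl hab).elim

lemma mem_support_concat {x u w a : V} {p : G.Walk x u} (h : G.Adj u w) :
    a ∈ (p.concat h).support ↔ a ∈ p.support ∨ a = w := by
  rw [Walk.support_concat, List.mem_append, List.mem_singleton]

/-- A distance levelling of the subgraph induced by `A` from `x`, recorded through the properties
of distances that matter: only `x` has level `0`, every other vertex has a parent one level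
below, and adjacent vertices have levels differing by at most one. -/
structure IsLevelling (G : SimpleGraph V) (A : Set V) (x : V) (lev : V → ℕ) : Prop where
  mem : x ∈ A
  root : lev x = 0
  eq_root : ∀ u ∈ A, lev u = 0 → u = x
  parent : ∀ u ∈ A, 0 < lev u → ∃ p ∈ A, G.Adj p u ∧ lev p + 1 = lev u
  adj_le : ∀ a ∈ A, ∀ b ∈ A, G.Adj a b → lev a ≤ lev b + 1

lemma exists_levelling {A : Set V} (hA : (G.induce A).Connected) {x : V} (hx : x ∈ A) :
    ∃ lev, IsLevelling G A x lev := by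
  classical
  refine ⟨fun u => if h : u ∈ A then (G.induce A).dist ⟨x, hx⟩ ⟨u, h⟩ else 0, hx, ?_, ?_, ?_, ?_⟩
  · simp [hx]
  · intro u hu h
    simp only [hu, dite_true] at h
    exact (Subtype.ext_iff.mp (hA.dist_eq_zero_iff.mp h)).symm
  · intro u hu h
    simp only [hu, dite_true] at h ⊢
    obtain ⟨p, hp⟩ := hA.exists_walk_length_eq_dist ⟨x, hx⟩ ⟨u, hu⟩
    have hnil : ¬ p.Nil := by
      intro hn
      have := Walk.length_eq_zero_iff.mpr hn
      omega
    have hadj := p.adj_penultimate hnil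
    refine ⟨p.penultimate.1, p.penultimate.2, hadj, ?_⟩
    simp only [p.penultimate.2, dite_true]
    have h1 := (G.induce A).dist_le p.dropLast
    have h2 := hadj.diff_dist_adj (u := ⟨x, hx⟩)
    have h3 : p.dropLast.length = p.length - 1 := by simp
    change (G.induce A).dist ⟨x, hx⟩ p.penultimate + 1 = _
    omega
  · intro a ha b hb hab
    simp only [ha, hb, dite_true]
    have h2 := (show (G.induce A).Adj ⟨a, ha⟩ ⟨b, hb⟩ from hab).diff_dist_adj (u := ⟨x, hx⟩)
    omega

/-- A path from the root of a levelling that descends one level at each step. -/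
structure IsGeodesic (A : Set V) (lev : V → ℕ) {x p : V} (R : G.Walk x p) : Prop where
  induced : IsInducedPathW R
  length_eq : R.length = lev p
  mem : ∀ a ∈ R.support, a ∈ A
  lev_le : ∀ a ∈ R.support, lev a ≤ lev p
  lev_inj : ∀ a ∈ R.support, ∀ b ∈ R.support, lev a = lev b → a = b
  adj_end : ∀ a ∈ R.support, lev a + 1 = lev p → G.Adj a p

lemma exists_geodesic {A : Set V} {x : V} {lev : V → ℕ} (hL : IsLevelling G A x lev) {p : V}
    (hp : p ∈ A) : ∃ R : G.Walk x p, IsGeodesic A lev R := by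
  induction hn : lev p generalizing p with
  | zero =>
    obtain rfl := hL.eq_root p hp hn
    refine ⟨Walk.nil, ⟨Walk.IsPath.nil, ?_⟩, ?_, ?_, ?_, ?_, ?_⟩ <;> simp [hn, hp]
  | succ n ih =>
    obtain ⟨o, ho, hop, hlev⟩ := hL.parent p hp (by omega)
    obtain ⟨R, hR⟩ := ih ho (by omega)
    have hlt : ∀ a ∈ R.support, lev a < lev p := fun a ha => by
      have := hR.lev_le a ha
      omega
    refine ⟨R.concat hop, hR.induced.concat' hop ?_ ?_, ?_, ?_, ?_, ?_, ?_⟩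
    · rintro a ha rfl
      exact lt_irrefl _ (hlt a ha)
    · intro a ha hap
      have h1 := hL.adj_le p hp a (hR.mem a ha) hap.symm
      have h2 := hlt a ha
      exact hR.lev_inj a ha o R.end_mem_support (by omega)
    · rw [Walk.length_concat, hR.length_eq, hlev]
    · intro a ha
      rcases (mem_support_concat hop).mp ha with ha | rfl
      · exact hR.mem a ha
      · exact hp
    · intro a ha
      rcases (mem_support_concat hop).mp ha with ha | rfl
      · exact (hlt a ha).le
      · exact le_rfl
    · intro a ha b hb hab
      rcases (mem_support_concat hop).mp ha with ha' | rfl <;>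
        rcases (mem_support_concat hop).mp hb with hb' | rfl
      · exact hR.lev_inj a ha' b hb' hab
      · exact absurd hab (hlt a ha').ne
      · exact absurd hab (hlt b hb').ne'
      · rfl
    · intro a ha hlev'
      rcases (mem_support_concat hop).mp ha with ha | rfl
      · rwa [hR.lev_inj a ha o R.end_mem_support (by omega)]
      · omega

/-- Two geodesics ending at the parents `p`, `p'` of the ends of an edge `z z'` inside one level
of a levelling. -/
structure IsFork (G : SimpleGraph V) (A : Set V) (lev : V → ℕ) {x p p' : V} (R : G.Walk x p)
    (R' : G.Walk x p') (z z' : V) : Prop where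
  geo : IsGeodesic A lev R
  geo' : IsGeodesic A lev R'
  mem : z ∈ A
  mem' : z' ∈ A
  adj : G.Adj z z'
  adj_p : G.Adj p z
  adj_p' : G.Adj p' z'
  lev_p : lev p + 1 = lev z
  lev_p' : lev p' + 1 = lev z
  lev_eq : lev z' = lev z

lemma IsFork.symm {A : Set V} {lev : V → ℕ} {x p p' z z' : V} {R : G.Walk x p} {R' : G.Walk x p'}
    (hF : IsFork G A lev R R' z z') : IsFork G A lev R' R z' z where
  geo := hF.geo'
  geo' := hF.geo
  mem := hF.mem'
  mem' := hF.mem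
  adj := hF.adj.symm
  adj_p := hF.adj_p'
  adj_p' := hF.adj_p
  lev_p := by rw [hF.lev_p', hF.lev_eq]
  lev_p' := by rw [hF.lev_p, hF.lev_eq]
  lev_eq := hF.lev_eq.symm

lemma IsGeodesic.ne_of_lev {A : Set V} {lev : V → ℕ} {x p w : V} {R : G.Walk x p}
    (hR : IsGeodesic A lev R) (hw : lev p + 1 = lev w) : ∀ a ∈ R.support, a ≠ w := by
  rintro a ha rfl
  have := hR.lev_le a ha
  omega

/-- A vertex just below the end of a geodesic sees no vertex of it except possibly the end. -/
lemma IsGeodesic.eq_end_of_adj {A : Set V} {lev : V → ℕ} {x p w : V} {R : G.Walk x p}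
    (hL : IsLevelling G A x lev) (hR : IsGeodesic A lev R) (hwA : w ∈ A)
    (hw : lev p + 1 = lev w) : ∀ a ∈ R.support, G.Adj a w → a = p := by
  intro a ha haw
  have h1 := hL.adj_le w hwA a (hR.mem a ha) haw.symm
  have h2 := hR.lev_le a ha
  exact hR.lev_inj a ha p R.end_mem_support (by omega)

/-- The induced path that follows `R'` to `p'` and then crosses the edge `z' z`. -/
lemma IsFork.crossing_induced {A : Set V} {lev : V → ℕ} {x p p' z z' : V} {R : G.Walk x p}
    {R' : G.Walk x p'} (hL : IsLevelling G A x lev) (h3 : G.CliqueFree 3)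
    (hF : IsFork G A lev R R' z z') :
    IsInducedPathW ((R'.concat hF.adj_p').concat hF.adj.symm) := by
  refine (hF.geo'.induced.concat' hF.adj_p'
    (hF.geo'.ne_of_lev (by rw [hF.lev_p', hF.lev_eq]))
    (hF.geo'.eq_end_of_adj hL hF.mem' (by rw [hF.lev_p', hF.lev_eq]))).concat' hF.adj.symm ?_ ?_
  · intro a ha
    rcases (mem_support_concat _).mp ha with ha | rfl
    · exact hF.geo'.ne_of_lev hF.lev_p' a ha
    · exact hF.adj.ne'
  · intro a ha haz
    rcases (mem_support_concat _).mp ha with ha | rfl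
    · obtain rfl := hF.geo'.eq_end_of_adj hL hF.mem hF.lev_p' a ha haz
      exact (not_adj_of_common h3 hF.adj_p' haz hF.adj.symm).elim
    · rfl

/-- Paths of both parities to a vertex `q` of the same level that sees `z`. -/
lemma IsFork.parity_of_adj_z {A : Set V} {lev : V → ℕ} {x p p' z z' q : V} {R : G.Walk x p}
    {R' : G.Walk x p'} (hL : IsLevelling G A x lev) (h3 : G.CliqueFree 3)
    (hF : IsFork G A lev R R' z z') (hqA : q ∈ A) (hq : lev q = lev z) (hqz : G.Adj z q)
    (hqz' : q ≠ z') {S : Set V} (hSR : ∀ a ∈ R.support, a ∈ S) (hSR' : ∀ a ∈ R'.support, a ∈ S)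
    (hSz : z ∈ S) (hSz' : z' ∈ S) (hSq : q ∈ S) : HasBothParities G S x q := by
  have hR := hF.geo
  have hR' := hF.geo'
  have hqp : ¬ G.Adj p q := fun h => not_adj_of_common h3 hF.adj_p h hqz
  have hzz'q : ¬ G.Adj z' q := not_adj_of_common h3 hF.adj hqz
  have hlp : lev p + 1 = lev q := by rw [hF.lev_p, hq]
  have hlp' : lev p' + 1 = lev q := by rw [hF.lev_p', hq]
  -- the path `x ⋯ p z q`
  have i1 : IsInducedPathW ((R.concat hF.adj_p).concat hqz) := by
    refine (hR.induced.concat' hF.adj_p (hR.ne_of_lev hF.lev_p)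
      (hR.eq_end_of_adj hL hF.mem hF.lev_p)).concat' hqz ?_ ?_
    · intro a ha
      rcases (mem_support_concat _).mp ha with ha | rfl
      · exact hR.ne_of_lev hlp a ha
      · exact hqz.ne
    · intro a ha haq
      rcases (mem_support_concat _).mp ha with ha | rfl
      · obtain rfl := hR.eq_end_of_adj hL hqA hlp a ha haq
        exact (hqp haq).elim
      · rfl
  have s1 : ∀ w ∈ ((R.concat hF.adj_p).concat hqz).support, w ∈ S := by
    intro w hw
    simp only [mem_support_concat] at hw
    rcases hw with (hw | rfl) | rfl
    exacts [hSR w hw, hSz, hSq]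
  by_cases hqp' : G.Adj p' q
  · refine hasBothParities_of _ (R'.concat hqp') i1 (hR'.induced.concat' hqp'
      (hR'.ne_of_lev hlp') (hR'.eq_end_of_adj hL hqA hlp')) s1 ?_ ?_
    · intro w hw
      simp only [mem_support_concat] at hw
      rcases hw with hw | rfl
      exacts [hSR' w hw, hSq]
    · simp only [Walk.length_concat, hR.length_eq, hR'.length_eq]
      have := hF.lev_p
      have := hF.lev_p'
      omega
  · -- the path `x ⋯ p' z' z q`
    refine hasBothParities_of _ (((R'.concat hF.adj_p').concat hF.adj.symm).concat hqz) i1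
      ((hF.crossing_induced hL h3).concat' hqz ?_ ?_) s1 ?_ ?_
    · intro a ha
      simp only [mem_support_concat] at ha
      rcases ha with (ha | rfl) | rfl
      exacts [hR'.ne_of_lev hlp' a ha, hqz'.symm, hqz.ne]
    · intro a ha haq
      simp only [mem_support_concat] at ha
      rcases ha with (ha | rfl) | rfl
      · obtain rfl := hR'.eq_end_of_adj hL hqA hlp' a ha haq
        exact (hqp' haq).elim
      · exact (hzz'q haq).elim
      · rfl
    · intro w hw
      simp only [mem_support_concat] at hw
      rcases hw with ((hw | rfl) | rfl) | rfl
      exacts [hSR' w hw, hSz', hSz, hSq]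
    · simp only [Walk.length_concat, hR.length_eq, hR'.length_eq]
      have := hF.lev_p
      have := hF.lev_p'
      omega

/-- Paths of both parities to a vertex `q` of the same level that sees `p` but neither `z` nor
`z'`. The absence of induced 5-cycles keeps `p` away from the vertex before `p'` on `R'`. -/
lemma IsFork.parity_of_adj_p {A : Set V} {lev : V → ℕ} {x p p' z z' q : V} {R : G.Walk x p}
    {R' : G.Walk x p'} (hL : IsLevelling G A x lev) (h3 : G.CliqueFree 3)
    (h5 : NoInducedCycle G 5)
    (hF : IsFork G A lev R R' z z') (hqA : q ∈ A) (hq : lev q = lev z) (hqp : G.Adj p q)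
    (hqz : ¬ G.Adj z q) (hqz' : ¬ G.Adj z' q) (hne : q ≠ z) (hne' : q ≠ z')
    {S : Set V} (hSR : ∀ a ∈ R.support, a ∈ S) (hSR' : ∀ a ∈ R'.support, a ∈ S)
    (hSz : z ∈ S) (hSz' : z' ∈ S) (hSq : q ∈ S) : HasBothParities G S x q := by
  have hR := hF.geo
  have hR' := hF.geo'
  have hp := hR.mem p R.end_mem_support
  have hp' := hR'.mem p' R'.end_mem_support
  have hlz := hF.lev_p
  have hlz' := hF.lev_p'
  have hlp : lev p + 1 = lev q := by rw [hF.lev_p, hq]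
  have hlp' : lev p' + 1 = lev q := by rw [hF.lev_p', hq]
  have hpz' : ¬ G.Adj p z' := fun h => not_adj_of_common h3 hF.adj_p h hF.adj
  have hp'z : ¬ G.Adj p' z := fun h => not_adj_of_common h3 hF.adj_p' h hF.adj.symm
  have hqp' : ¬ G.Adj p' q := by
    intro h
    have hpp' : ¬ G.Adj p p' := fun h' => not_adj_of_common h3 hqp h' h.symm
    exact false_of_induced_five h5 hqp.symm hF.adj_p hF.adj hF.adj_p'.symm h
      (fun h => hqz h.symm) (fun h => hqz' h.symm) hpz' hpp' (fun h => hp'z h.symm)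
  have hpne : ∀ a ∈ R'.support, a ≠ p := by
    rintro a ha rfl
    obtain rfl := hR'.lev_inj a ha p' R'.end_mem_support (by omega)
    exact hqp' hqp
  have hponly : ∀ a ∈ R'.support, G.Adj a p → a = p' := by
    intro a ha hap
    have h1 := hL.adj_le p hp a (hR'.mem a ha) hap.symm
    have h2 := hR'.lev_le a ha
    rcases Nat.lt_or_ge (lev a) (lev p') with h | h
    · exfalso
      have hap' := hR'.adj_end a ha (by omega)
      have hA := hR'.mem a ha
      have haz : ¬ G.Adj a z := fun h' => by
        have := hL.adj_le z hF.mem a hA h'.symm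
        omega
      have haz' : ¬ G.Adj a z' := fun h' => by
        have := hL.adj_le z' hF.mem' a hA h'.symm
        have := hF.lev_eq
        omega
      exact false_of_induced_five h5 hap hF.adj_p hF.adj hF.adj_p'.symm hap'.symm haz haz'
        hpz' (not_adj_of_common h3 hap hap') (fun h => hp'z h.symm)
    · exact hR'.lev_inj a ha p' R'.end_mem_support (by omega)
  have i1 : IsInducedPathW (R.concat hqp) := hR.induced.concat' hqp (hR.ne_of_lev hlp)
    (hR.eq_end_of_adj hL hqA hlp)
  have s1 : ∀ w ∈ (R.concat hqp).support, w ∈ S := by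
    intro w hw
    simp only [mem_support_concat] at hw
    rcases hw with hw | rfl
    exacts [hSR w hw, hSq]
  by_cases hpp' : G.Adj p' p
  · -- the path `x ⋯ p' p q`
    refine hasBothParities_of _ ((R'.concat hpp').concat hqp) i1
      ((hR'.induced.concat' hpp' hpne hponly).concat' hqp ?_ ?_) s1 ?_ ?_
    · intro a ha
      simp only [mem_support_concat] at ha
      rcases ha with ha | rfl
      exacts [hR'.ne_of_lev hlp' a ha, hqp.ne]
    · intro a ha haq
      simp only [mem_support_concat] at ha
      rcases ha with ha | rfl
      · obtain rfl := hR'.eq_end_of_adj hL hqA hlp' a ha haq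
        exact (hqp' haq).elim
      · rfl
    · intro w hw
      simp only [mem_support_concat] at hw
      rcases hw with (hw | rfl) | rfl
      exacts [hSR' w hw, hSR _ R.end_mem_support, hSq]
    · simp only [Walk.length_concat, hR.length_eq, hR'.length_eq]
      omega
  · -- the path `x ⋯ p' z' z p q`
    refine hasBothParities_of _
      ((((R'.concat hF.adj_p').concat hF.adj.symm).concat hF.adj_p.symm).concat hqp) i1
      (((hF.crossing_induced hL h3).concat' hF.adj_p.symm ?_ ?_).concat' hqp ?_ ?_) s1 ?_ ?_
    · intro a ha
      simp only [mem_support_concat] at ha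
      rcases ha with (ha | rfl) | rfl
      · exact hpne a ha
      · rintro rfl
        exact hqz' hqp
      · exact hF.adj_p.ne'
    · intro a ha hap
      simp only [mem_support_concat] at ha
      rcases ha with (ha | rfl) | rfl
      · obtain rfl := hponly a ha hap
        exact (hpp' hap).elim
      · exact (hpz' hap.symm).elim
      · rfl
    · intro a ha
      simp only [mem_support_concat] at ha
      rcases ha with ((ha | rfl) | rfl) | rfl
      exacts [hR'.ne_of_lev hlp' a ha, hne'.symm, hne.symm, hqp.ne]
    · intro a ha haq
      simp only [mem_support_concat] at ha
      rcases ha with ((ha | rfl) | rfl) | rfl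
      · obtain rfl := hR'.eq_end_of_adj hL hqA hlp' a ha haq
        exact (hqp' haq).elim
      · exact (hqz' haq).elim
      · exact (hqz haq).elim
      · rfl
    · intro w hw
      simp only [mem_support_concat] at hw
      rcases hw with (((hw | rfl) | rfl) | rfl) | rfl
      exacts [hSR' w hw, hSz', hSz, hSR _ R.end_mem_support, hSq]
    · simp only [Walk.length_concat, hR.length_eq, hR'.length_eq]
      omega

/-- The regular block built from a fork and one further vertex `q`. -/
def forkBlock {x p p' : V} (R : G.Walk x p) (R' : G.Walk x p') (z z' q : V) : Set V :=
  {w | w ∈ R.support ∨ w ∈ R'.support ∨ w = z ∨ w = z' ∨ w = q}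

lemma IsFork.hasBothParities {A : Set V} {lev : V → ℕ} {x p p' z z' q : V} {R : G.Walk x p}
    {R' : G.Walk x p'} (hL : IsLevelling G A x lev) (h3 : G.CliqueFree 3)
    (h5 : NoInducedCycle G 5)
    (hF : IsFork G A lev R R' z z') (hqA : q ∈ A) (hq : lev q = lev z) (hne : q ≠ z)
    (hne' : q ≠ z') (hadj : G.Adj p q ∨ G.Adj p' q ∨ G.Adj z q ∨ G.Adj z' q) :
    HasBothParities G (forkBlock R R' z z' q) x q := by
  have hq' : lev q = lev z' := by rw [hq, hF.lev_eq]
  have s1 : ∀ a ∈ R.support, a ∈ forkBlock R R' z z' q := fun a ha => Or.inl ha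
  have s2 : ∀ a ∈ R'.support, a ∈ forkBlock R R' z z' q := fun a ha => Or.inr (Or.inl ha)
  have s3 : z ∈ forkBlock R R' z z' q := by simp [forkBlock]
  have s4 : z' ∈ forkBlock R R' z z' q := by simp [forkBlock]
  have s5 : q ∈ forkBlock R R' z z' q := by simp [forkBlock]
  by_cases hz : G.Adj z q
  · exact hF.parity_of_adj_z hL h3 hqA hq hz hne' s1 s2 s3 s4 s5
  by_cases hz' : G.Adj z' q
  · exact hF.symm.parity_of_adj_z hL h3 hqA hq' hz' hne s2 s1 s4 s3 s5
  rcases hadj with h | h | h | h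
  · exact hF.parity_of_adj_p hL h3 h5 hqA hq h hz hz' hne hne' s1 s2 s3 s4 s5
  · exact hF.symm.parity_of_adj_p hL h3 h5 hqA hq' h hz' hz hne' hne s2 s1 s4 s3 s5
  · exact (hz h).elim
  · exact (hz' h).elim

/-- Colour a vertex of the block by the parity of its level together with one bit: whether it
lies on the side of `R` and `z`, where `q` is put on a side on which it has no neighbour of its own level. -/
lemma IsFork.block_colorable {A : Set V} {lev : V → ℕ} {x p p' z z' q : V} {R : G.Walk x p}
    {R' : G.Walk x p'} (hL : IsLevelling G A x lev) (h3 : G.CliqueFree 3)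
    (hF : IsFork G A lev R R' z z') (hqA : q ∈ A) (hq : lev q = lev z) (hne : q ≠ z)
    (hne' : q ≠ z') :
    (G.induce (forkBlock R R' z z' q)).chromaticNumber ≤ 4 := by
  classical
  have hR := hF.geo
  have hR' := hF.geo'
  have hlp := hF.lev_p
  have hlp' := hF.lev_p'
  have hlz' := hF.lev_eq
  have l1 : ∀ a ∈ R.support, lev a < lev z := fun a ha => by
    have := hR.lev_le a ha
    omega
  have l2 : ∀ a ∈ R'.support, lev a < lev z := fun a ha => by
    have := hR'.lev_le a ha
    omega
  set side : V → Prop := fun a => a ∈ R.support ∨ a = z ∨ (a = q ∧ ¬ G.Adj z q) with hside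
  have hsz : side z := Or.inr (Or.inl rfl)
  have hsz' : ¬ side z' := by
    rintro (h | h | h)
    · have := l1 _ h
      omega
    · exact hF.adj.ne' h
    · exact hne' h.1.symm
  have hsq : side q ↔ ¬ G.Adj z q := by
    constructor
    · rintro (h | h | h)
      · have := l1 _ h
        omega
      · exact (hne h).elim
      · exact h.2
    · intro h
      exact Or.inr (Or.inr ⟨rfl, h⟩)
  have hsR' : ∀ a ∈ R'.support, side a → a ∈ R.support := by
    rintro a ha (h | rfl | ⟨rfl, _⟩)
    · exact h
    · exact (lt_irrefl _ (l2 a ha)).elim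
    · have := l2 a ha
      omega
  have hmem : ∀ a ∈ forkBlock R R' z z' q, a ∈ A := by
    rintro a (h | h | rfl | rfl | rfl)
    exacts [hR.mem a h, hR'.mem a h, hF.mem, hF.mem', hqA]
  have hzq : ¬ (G.Adj z q ∧ G.Adj z' q) := fun h =>
    not_adj_of_common h3 hF.adj h.1 h.2
  -- within one level, adjacent vertices of the block lie on different sides
  have key : ∀ a ∈ forkBlock R R' z z' q, ∀ b ∈ forkBlock R R' z z' q, lev a = lev b →
      G.Adj a b → ¬ (side a ↔ side b) := by
    intro a ha b hb hlab hab hiff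
    have hne_ab := hab.ne
    have e1 : ∀ c ∈ R.support, side c := fun c hc => Or.inl hc
    rcases ha with ha | ha | rfl | rfl | rfl <;> rcases hb with hb | hb | rfl | rfl | rfl
    all_goals first
      | exact hne_ab rfl
      | exact hne_ab (hR.lev_inj a ha b hb hlab)
      | exact hne_ab (hR'.lev_inj a ha b hb hlab)
      | exact hne_ab (hR.lev_inj a ha b (hsR' b hb (hiff.mp (e1 a ha))) hlab)
      | exact hne_ab (hR.lev_inj a (hsR' a ha (hiff.mpr (e1 b hb))) b hb hlab)
      | (have := l1 a ha; omega)
      | (have := l2 a ha; omega)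
      | (have := l1 b hb; omega)
      | (have := l2 b hb; omega)
      | exact hsz' (hiff.mp hsz)
      | exact hsz' (hiff.mpr hsz)
      | exact hsq.mp (hiff.mp hsz) hab
      | exact hsq.mp (hiff.mpr hsz) hab.symm
      | exact hsz' (hiff.mpr (hsq.mpr fun h => hzq ⟨h, hab⟩))
      | exact hsz' (hiff.mp (hsq.mpr fun h => hzq ⟨h, hab.symm⟩))
  refine Colorable.chromaticNumber_le (n := 4) (colorable_induce_iff.mpr
    ⟨fun a => 2 * (lev a % 2) + if side a then 1 else 0, ?_, ?_⟩)
  · intro a _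
    dsimp only
    split_ifs <;> omega
  · intro a ha b hb hab hc
    have h1 := hL.adj_le a (hmem a ha) b (hmem b hb) hab
    have h2 := hL.adj_le b (hmem b hb) a (hmem a ha) hab.symm
    dsimp only at hc
    have hlab : lev a = lev b := by split_ifs at hc <;> omega
    have hk := key a ha b hb hlab hab
    split_ifs at hc with c1 c2 c2
    · exact hk (iff_of_true c1 c2)
    · omega
    · omega
    · exact hk (iff_of_false c1 c2)

end Paths

/-! ### Splitting off one regular block -/

section KeyStep

variable {V : Type} {G : SimpleGraph V}

/-- One link of a parity changing path inside the set `A`: a regular block `B` with origin `x`,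
a path from `y ∈ B` to `x'`, and a connected remainder `H` containing `x'`. -/
structure Link (G : SimpleGraph V) (A : Set V) (x : V) where
  B : Set V
  H : Set V
  y : V
  x' : V
  path : G.Walk y x'
  x_mem : x ∈ B
  y_mem : y ∈ B
  x'_mem : x' ∈ H
  B_sub : B ⊆ A
  H_sub : H ⊆ A
  path_sub : ∀ w ∈ path.support, w ∈ A
  path_induced : IsInducedPathW path
  path_length : 2 ≤ path.length
  disj : Disjoint B H
  B_path : ∀ w ∈ B, w ∈ path.support → w = y
  H_path : ∀ w ∈ H, w ∈ path.support → w = x'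
  edges : ∀ a b, (a ∈ B ∨ a ∈ H ∨ a ∈ path.support) → (b ∈ B ∨ b ∈ H ∨ b ∈ path.support) →
    G.Adj a b → (a ∈ B ∧ b ∈ B) ∨ (a ∈ H ∧ b ∈ H) ∨ (a ∈ path.support ∧ b ∈ path.support)
  parities : HasBothParities G B x y
  H_conn : (G.induce H).Connected
  B_chrom : (G.induce B).chromaticNumber ≤ 4

/-- The main step. Take a level of the levelling of `A` from `x` carrying half of the chromatic
number, an edge `z z'` in it, and geodesics to parents of its two ends. Four colours pay for the
neighbourhoods of the bottom of this fork; a vertex `q` through which the fork is attached to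
the rest of the level is the end of the block, and two more colours pay for the path leaving
`q`. -/
lemma exists_link [Finite V] (h3 : G.CliqueFree 3) (h5 : NoInducedCycle G 5) {A : Set V}
    (hA : (G.induce A).Connected) {x : V} (hx : x ∈ A) (hχ : 18 ≤ chiSet G A) :
    ∃ L : Link G A x, chiSet G A ≤ 2 * chiSet G L.H + 12 := by
  obtain ⟨lev, hL⟩ := exists_levelling hA hx
  obtain ⟨d, hd⟩ := exists_level hL.adj_le
  obtain ⟨M, hMA, hM, hMχ, -⟩ := exists_component
    (by omega : 0 < chiSet G {a ∈ A | lev a = d}) le_rfl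
  obtain ⟨z, hzM, z', hz'M, hzz'⟩ : ∃ z ∈ M, ∃ z' ∈ M, G.Adj z z' := by
    by_contra! hcon
    have := chiSet_le_one_of_indep hcon
    omega
  obtain ⟨hzA, hzd⟩ := hMA hzM
  obtain ⟨hz'A, hz'd⟩ := hMA hz'M
  have hdpos : 0 < d := by
    rcases Nat.eq_zero_or_pos d with rfl | h
    · rw [hL.eq_root z hzA hzd, hL.eq_root z' hz'A hz'd] at hzz'
      exact (G.irrefl hzz').elim
    · exact h
  obtain ⟨p, hp, hpz, hlp⟩ := hL.parent z hzA (by omega)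
  obtain ⟨p', hp', hpz', hlp'⟩ := hL.parent z' hz'A (by omega)
  obtain ⟨R, hR⟩ := exists_geodesic hL hp
  obtain ⟨R', hR'⟩ := exists_geodesic hL hp'
  have hF : IsFork G A lev R R' z z' :=
    ⟨hR, hR', hzA, hz'A, hzz', hpz, hpz', hlp, by omega, by omega⟩
  -- delete the neighbourhoods of `p`, `p'`, `z`, `z'` inside the level
  set M1 := {a ∈ M | ¬ G.Adj p a} with hM1
  set M2 := {a ∈ M1 | ¬ G.Adj p' a} with hM2
  set M3 := {a ∈ M2 | ¬ G.Adj z a} with hM3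
  set M4 := {a ∈ M3 | ¬ G.Adj z' a} with hM4
  have c1 := chiSet_le_diff_nbr h3 M p
  have c2 := chiSet_le_diff_nbr h3 M1 p'
  have c3 := chiSet_le_diff_nbr h3 M2 z
  have c4 := chiSet_le_diff_nbr h3 M3 z'
  rw [← hM1] at c1
  rw [← hM2] at c2
  rw [← hM3] at c3
  rw [← hM4] at c4
  obtain ⟨H0, hH0M, hH0, hH0χ, hH0max⟩ := exists_component
    (by omega : 0 < chiSet G M4) le_rfl
  have f0 : ∀ a ∈ H0, a ∈ M ∧ ¬ G.Adj p a ∧ ¬ G.Adj p' a ∧ ¬ G.Adj z a ∧ ¬ G.Adj z' a := by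
    intro a ha
    obtain ⟨⟨⟨⟨h1, h2⟩, h3⟩, h4⟩, h5⟩ := hH0M ha
    exact ⟨h1, h2, h3, h4, h5⟩
  have hzH0 : z ∉ H0 := fun h => (f0 z h).2.2.2.2 hzz'.symm
  have hz'H0 : z' ∉ H0 := fun h => (f0 z' h).2.2.2.1 hzz'
  obtain ⟨⟨s, hs⟩⟩ := hH0.nonempty
  -- `q` is where the fork is attached to `H0` inside the level
  obtain ⟨q, hqM, h, hhM, hqH0, hhH0, hqh⟩ := exists_crossing hM (f0 s hs).1 hs hzM hzH0
  obtain ⟨hqA, hqd⟩ := hMA hqM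
  have hqz : q ≠ z := by
    rintro rfl
    exact (f0 h hhH0).2.2.2.1 hqh
  have hqz' : q ≠ z' := by
    rintro rfl
    exact (f0 h hhH0).2.2.2.2 hqh
  have hqadj : G.Adj p q ∨ G.Adj p' q ∨ G.Adj z q ∨ G.Adj z' q := by
    by_contra! hcon
    exact hH0max q ⟨⟨⟨⟨hqM, hcon.1⟩, hcon.2.1⟩, hcon.2.2.1⟩, hcon.2.2.2⟩ hqH0 h hhH0 hqh
  -- leave `q` along two further vertices `a`, `b`
  obtain ⟨a, haH0, H1, hH1, hqa, hqH1, haH1, ⟨b', hb', hab'⟩, hH1c, hH1χ⟩ :=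
    pull h3 hH0 hhH0 hqh (n := chiSet G H0 - 1) (by omega) (by omega)
  obtain ⟨b, hbH1, H2, hH2, hab, haH2, hbH2, ⟨e, he, hbe⟩, hH2c, hH2χ⟩ :=
    pull h3 hH1c hb' hab' (n := chiSet G H0 - 2) (by omega) (by omega)
  set B := forkBlock R R' z z' q with hB
  set H := insert b H2 with hHdef
  have hHH1 : ∀ w ∈ H, w ∈ H1 := by
    rintro w (rfl | hw)
    exacts [hbH1, hH2 hw]
  have hqB : q ∈ B := by simp [hB, forkBlock]
  have hBA : B ⊆ A := by
    rintro w (hw | hw | rfl | rfl | rfl)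
    exacts [hR.mem w hw, hR'.mem w hw, hzA, hz'A, hqA]
  -- `H0` is disjoint from the block and sees only `q` in it
  have hBH0 : ∀ w ∈ B, w ∉ H0 := by
    rintro w (hw | hw | rfl | rfl | rfl) hwH
    · have := hR.lev_le w hw
      have := (hMA (f0 w hwH).1).2
      omega
    · have := hR'.lev_le w hw
      have := (hMA (f0 w hwH).1).2
      omega
    exacts [hzH0 hwH, hz'H0 hwH, hqH0 hwH]
  have hBadj : ∀ w ∈ B, ∀ t ∈ H0, G.Adj w t → w = q := by
    rintro w hw t ht hwt
    obtain ⟨htM, n1, n2, n3, n4⟩ := f0 t ht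
    obtain ⟨htA, htd⟩ := hMA htM
    rcases hw with hw | hw | rfl | rfl | rfl
    · obtain rfl := hR.eq_end_of_adj hL htA (by omega) w hw hwt
      exact (n1 hwt).elim
    · obtain rfl := hR'.eq_end_of_adj hL htA (by omega) w hw hwt
      exact (n2 hwt).elim
    · exact (n3 hwt).elim
    · exact (n4 hwt).elim
    · rfl
  have hHH0 : ∀ w ∈ H, w ∈ H0 := fun w hw => hH1 (hHH1 w hw)
  have haH : a ∉ H := fun h => haH1 (hHH1 a h)
  have hqH : ∀ w ∈ H, ¬ G.Adj q w := fun w hw => hqH1 w (hHH1 w hw)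
  have haHadj : ∀ w ∈ H, G.Adj a w → w = b := by
    rintro w (rfl | hw) haw
    · rfl
    · exact (haH2 w hw haw).elim
  have hBHadj : ∀ w ∈ B, ∀ t ∈ H, ¬ G.Adj w t := by
    intro w hw t ht hwt
    obtain rfl := hBadj w hw t (hHH0 t ht) hwt
    exact hqH t ht hwt
  have haB : a ∉ B := fun h => hBH0 a h haH0
  have hbH : b ∈ H := Set.mem_insert _ _
  have hbB : b ∉ B := fun h => hBH0 b h (hHH0 b hbH)
  let W : G.Walk q b := Walk.cons hqa (Walk.cons hab Walk.nil)
  have hW : ∀ w, w ∈ W.support ↔ w = q ∨ w = a ∨ w = b := by simp [W]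
  have hqb : q ≠ b := fun h => hbB (h ▸ hqB)
  have hnqb : ¬ G.Adj q b := hqH b hbH
  let L : Link G A x :=
    { B := B
      H := H
      y := q
      x' := b
      path := W
      x_mem := Or.inl R.start_mem_support
      y_mem := hqB
      x'_mem := hbH
      B_sub := hBA
      H_sub := fun w hw => (hMA (f0 w (hHH0 w hw)).1).1
      path_sub := by
        intro w hw
        rcases (hW w).mp hw with rfl | rfl | rfl
        exacts [hqA, (hMA (f0 _ haH0).1).1, (hMA (f0 _ (hHH0 _ hbH)).1).1]
      path_induced := by
        refine ⟨by simp [W, hqa.ne, hab.ne, hqb], ?_⟩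
        intro s hs t ht hst
        rcases (hW s).mp hs with rfl | rfl | rfl <;> rcases (hW t).mp ht with rfl | rfl | rfl
        all_goals first
          | exact (G.irrefl hst).elim
          | exact (hnqb hst).elim
          | exact (hnqb hst.symm).elim
          | simp [W]
      path_length := by simp [W]
      disj := Set.disjoint_left.mpr fun w hw hw' => hBH0 w hw (hHH0 w hw')
      B_path := by
        intro w hw hwW
        rcases (hW w).mp hwW with rfl | rfl | rfl
        exacts [rfl, (haB hw).elim, (hbB hw).elim]
      H_path := by
        intro w hw hwW
        rcases (hW w).mp hwW with rfl | rfl | rfl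
        exacts [(hqH0 (hHH0 _ hw)).elim, (haH hw).elim, rfl]
      edges := by
        have hWa : a ∈ W.support := (hW a).mpr (Or.inr (Or.inl rfl))
        have hWb : b ∈ W.support := (hW b).mpr (Or.inr (Or.inr rfl))
        have hWq : q ∈ W.support := (hW q).mpr (Or.inl rfl)
        have red : ∀ s, (s ∈ B ∨ s ∈ H ∨ s ∈ W.support) → s ∈ B ∨ s ∈ H ∨ s = a := by
          rintro s (hs | hs | hs)
          · exact Or.inl hs
          · exact Or.inr (Or.inl hs)
          · rcases (hW s).mp hs with rfl | rfl | rfl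
            exacts [Or.inl hqB, Or.inr (Or.inr rfl), Or.inr (Or.inl hbH)]
        intro s t hs ht hst
        replace hs := red s hs
        replace ht := red t ht
        rcases hs with hs | hs | hs <;> rcases ht with ht | ht | ht
        · exact Or.inl ⟨hs, ht⟩
        · exact (hBHadj s hs t ht hst).elim
        · subst ht
          obtain rfl := hBadj s hs _ haH0 hst
          exact Or.inr (Or.inr ⟨hWq, hWa⟩)
        · exact (hBHadj t ht s hs hst.symm).elim
        · exact Or.inr (Or.inl ⟨hs, ht⟩)
        · subst ht
          obtain rfl := haHadj s hs hst.symm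
          exact Or.inr (Or.inr ⟨hWb, hWa⟩)
        · subst hs
          obtain rfl := hBadj t ht _ haH0 hst.symm
          exact Or.inr (Or.inr ⟨hWa, hWq⟩)
        · subst hs
          obtain rfl := haHadj t ht hst
          exact Or.inr (Or.inr ⟨hWa, hWb⟩)
        · subst hs ht
          exact (G.irrefl hst).elim
      parities := hF.hasBothParities hL h3 h5 hqA (by omega) hqz hqz' hqadj
      H_conn := connected_insert hH2c he hbe
      B_chrom := hF.block_colorable hL h3 hqA (by omega) hqz hqz' }
  refine ⟨L, ?_⟩
  have : chiSet G H2 ≤ chiSet G L.H := chiSet_mono (Set.subset_insert _ _)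
  omega

end KeyStep

/-! ### Assembling the parity changing path -/

section Assembly

variable {V : Type} {G : SimpleGraph V}

/-- The parity changing path of order `0`: a connected set with a chosen vertex. -/
def PCP.base {A : Set V} (hA : (G.induce A).Connected) {x : V} (hx : x ∈ A) : PCP G 0 where
  block := Fin.elim0
  lastBlock := A
  x := fun _ => x
  y := Fin.elim0
  path := fun i => i.elim0
  x_mem := fun i => i.elim0
  y_mem := fun i => i.elim0
  xlast_mem := hx
  path_induced := fun i => i.elim0
  path_length := fun i => i.elim0
  blocks_disjoint := fun i => i.elim0
  block_last_disjoint := fun i => i.elim0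
  block_path_inter := fun i => i.elim0
  last_path_inter := fun i => i.elim0
  paths_disjoint := fun i => i.elim0
  edges_within := by
    intro a b ha hb _
    simp only [Set.mem_union, Set.mem_iUnion, IsEmpty.exists_iff, or_false, false_or] at ha hb
    exact Or.inr (Or.inl ⟨ha, hb⟩)
  odd_path := fun i => i.elim0
  even_path := fun i => i.elim0
  last_connected := hA
  block_chrom := fun i => i.elim0

lemma PCP.mem_support {ℓ : ℕ} {P : PCP G ℓ} {a : V} : a ∈ P.support ↔
    (∃ i, a ∈ P.block i) ∨ a ∈ P.lastBlock ∨ ∃ i, a ∈ (P.path i).support := by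
  simp only [PCP.support, Set.mem_union, Set.mem_iUnion, Set.mem_ofPred_eq, or_assoc]

lemma PCP.origin_mem_support {ℓ : ℕ} (P : PCP G ℓ) : P.x 0 ∈ P.support := by
  rw [PCP.mem_support]
  cases ℓ with
  | zero => exact Or.inr (Or.inl P.xlast_mem)
  | succ n => exact Or.inl ⟨0, P.x_mem 0⟩

/-- The origin lies in no block other than the first. -/
lemma PCP.origin_mem_block {ℓ : ℕ} (P : PCP G ℓ) {i : Fin ℓ} (h : P.x 0 ∈ P.block i) :
    (i : ℕ) = 0 ∧ P.x 0 = P.x i.castSucc := by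
  obtain ⟨n, rfl⟩ : ∃ n, ℓ = n + 1 := ⟨ℓ - 1, by have := i.2; omega⟩
  by_cases hi : i = 0
  · subst hi
    exact ⟨rfl, rfl⟩
  · exact (Set.disjoint_left.mp (P.blocks_disjoint i 0 hi) h (P.x_mem 0)).elim

lemma PCP.origin_mem_lastBlock {ℓ : ℕ} (P : PCP G ℓ) (h : P.x 0 ∈ P.lastBlock) :
    ℓ = 0 ∧ P.x 0 = P.x (Fin.last ℓ) := by
  cases ℓ with
  | zero => exact ⟨rfl, rfl⟩
  | succ n => exact (Set.disjoint_left.mp (P.block_last_disjoint 0) (P.x_mem 0) h).elim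

/-- The two vertices of a regular block differ, since an odd path joins them; hence the origin
lies on none of the connecting paths. -/
lemma PCP.origin_notMem_path {ℓ : ℕ} (P : PCP G ℓ) (j : Fin ℓ) :
    P.x 0 ∉ (P.path j).support := by
  intro h
  obtain ⟨n, rfl⟩ : ∃ n, ℓ = n + 1 := ⟨ℓ - 1, by have := j.2; omega⟩
  rcases P.block_path_inter 0 j _ (P.x_mem 0) h with ⟨-, hxy⟩ | ⟨h0, -⟩
  · obtain ⟨p, hp, -, hodd⟩ := P.odd_path 0
    have key : ∀ (u w : V) (r : G.Walk u w), u = w → r.IsPath → r.length = 0 := by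
      rintro u _ r rfl hr
      exact Walk.length_eq_zero_iff.mpr (Walk.isPath_iff_nil.mp hr)
    rw [key _ _ p hxy hp.1] at hodd
    exact Nat.not_odd_zero hodd
  · simp at h0

lemma mem_support_copy {y a b w : V} (p : G.Walk y a) (h : a = b) :
    w ∈ (p.copy rfl h).support ↔ w ∈ p.support := by
  rw [Walk.support_copy]

lemma IsInducedPathW.copy' {y a b : V} {p : G.Walk y a} (hp : IsInducedPathW p) (h : a = b) :
    IsInducedPathW (p.copy rfl h) := by
  subst h
  exact hp

/-- Prepending a link to a parity changing path contained in its remainder. -/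
def PCP.cons {ℓ : ℕ} {A : Set V} {x : V} (L : Link G A x) (Q : PCP G ℓ) (hQ : Q.support ⊆ L.H)
    (hx : L.x' = Q.x 0) : PCP G (ℓ + 1) :=
  have hblock : ∀ i, ∀ w ∈ Q.block i, w ∈ L.H := fun i w hw =>
    hQ (PCP.mem_support.mpr (Or.inl ⟨i, hw⟩))
  have hlast : ∀ w ∈ Q.lastBlock, w ∈ L.H := fun w hw =>
    hQ (PCP.mem_support.mpr (Or.inr (Or.inl hw)))
  have hpath : ∀ i, ∀ w ∈ (Q.path i).support, w ∈ L.H := fun i w hw =>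
    hQ (PCP.mem_support.mpr (Or.inr (Or.inr ⟨i, hw⟩)))
  { block := Fin.cons L.B Q.block
    lastBlock := Q.lastBlock
    x := Fin.cons x Q.x
    y := Fin.cons L.y Q.y
    path := Fin.cases (L.path.copy rfl hx) (fun i => Q.path i)
    x_mem := Fin.cases L.x_mem (fun i => Q.x_mem i)
    y_mem := Fin.cases L.y_mem (fun i => Q.y_mem i)
    xlast_mem := Q.xlast_mem
    path_induced := Fin.cases (L.path_induced.copy' hx) (fun i => Q.path_induced i)
    path_length := Fin.cases ((Walk.length_copy L.path rfl hx).symm ▸ L.path_length)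
      (fun i => Q.path_length i)
    blocks_disjoint := by
      intro i j
      refine Fin.cases ?_ (fun i => ?_) i <;> refine Fin.cases ?_ (fun j => ?_) j
      · intro h
        exact (h rfl).elim
      · intro _
        exact Set.disjoint_of_subset_right (hblock j) L.disj
      · intro _
        exact (Set.disjoint_of_subset_right (hblock i) L.disj).symm
      · intro h
        exact Q.blocks_disjoint i j (fun h' => h (by rw [h']))
    block_last_disjoint := by
      refine Fin.cases ?_ (fun i => Q.block_last_disjoint i)
      exact Set.disjoint_of_subset_right hlast L.disj
    block_path_inter := by
      intro i j
      refine Fin.cases ?_ (fun i => ?_) i <;> refine Fin.cases ?_ (fun j => ?_) j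
      · intro w hw hw'
        exact Or.inl ⟨rfl, L.B_path w hw ((mem_support_copy _ hx).mp hw')⟩
      · intro w hw hw'
        exact (Set.disjoint_left.mp L.disj hw (hpath j w hw')).elim
      · intro w hw hw'
        obtain rfl := L.H_path w (hblock i w hw) ((mem_support_copy _ hx).mp hw')
        rw [hx] at hw ⊢
        obtain ⟨h1, h2⟩ := Q.origin_mem_block hw
        have h1' : (i : ℕ) = 0 := h1
        exact Or.inr ⟨by simp [h1'], h2⟩
      · intro w hw hw'
        rcases Q.block_path_inter i j w hw hw' with ⟨h1, h2⟩ | ⟨h1, h2⟩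
        · exact Or.inl ⟨by rw [h1], h2⟩
        · exact Or.inr ⟨by simp [h1], h2⟩
    last_path_inter := by
      intro j
      refine Fin.cases ?_ (fun j => ?_) j
      · intro w hw hw'
        obtain rfl := L.H_path w (hlast w hw) ((mem_support_copy _ hx).mp hw')
        rw [hx] at hw ⊢
        obtain ⟨h1, h2⟩ := Q.origin_mem_lastBlock hw
        exact ⟨by simp [h1], h2⟩
      · intro w hw hw'
        obtain ⟨h1, h2⟩ := Q.last_path_inter j w hw hw'
        exact ⟨by simp [h1], h2⟩
    paths_disjoint := by
      have key : ∀ j w, w ∈ L.path.support → w ∈ (Q.path j).support → False := by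
        intro j w hw hw'
        obtain rfl := L.H_path w (hpath j w hw') hw
        rw [hx] at hw'
        exact Q.origin_notMem_path j hw'
      intro i j
      refine Fin.cases ?_ (fun i => ?_) i <;> refine Fin.cases ?_ (fun j => ?_) j
      · intro h
        exact (h rfl).elim
      · intro _ w hw hw'
        exact key j w ((mem_support_copy _ hx).mp hw) hw'
      · intro _ w hw hw'
        exact key i w ((mem_support_copy _ hx).mp hw') hw
      · intro h
        exact Q.paths_disjoint i j (fun h' => h (by rw [h']))
    edges_within := by
      have red : ∀ a, a ∈ (⋃ i, (Fin.cons L.B Q.block : Fin (ℓ + 1) → Set V) i) ∪ Q.lastBlock ∪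
          (⋃ i : Fin (ℓ + 1), {w | w ∈ (Fin.cases (motive := fun i => G.Walk
            ((Fin.cons L.y Q.y : Fin (ℓ + 1) → V) i)
            ((Fin.cons x Q.x : Fin (ℓ + 2) → V) i.succ)) (L.path.copy rfl hx)
            (fun i => Q.path i) i).support}) →
          a ∈ L.B ∨ a ∈ Q.support ∨ a ∈ L.path.support := by
        intro a ha
        rcases ha with (ha | ha) | ha
        · obtain ⟨i, hi⟩ := Set.mem_iUnion.mp ha
          revert hi
          refine Fin.cases ?_ (fun i => ?_) i
          · exact fun hi => Or.inl hi
          · exact fun hi => Or.inr (Or.inl (PCP.mem_support.mpr (Or.inl ⟨i, hi⟩)))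
        · exact Or.inr (Or.inl (PCP.mem_support.mpr (Or.inr (Or.inl ha))))
        · obtain ⟨i, hi⟩ := Set.mem_iUnion.mp ha
          revert hi
          refine Fin.cases ?_ (fun i => ?_) i
          · exact fun hi => Or.inr (Or.inr ((mem_support_copy _ hx).mp hi))
          · exact fun hi => Or.inr (Or.inl (PCP.mem_support.mpr (Or.inr (Or.inr ⟨i, hi⟩))))
      have redL : ∀ a, (a ∈ L.B ∨ a ∈ Q.support ∨ a ∈ L.path.support) →
          a ∈ L.B ∨ a ∈ L.H ∨ a ∈ L.path.support := fun a =>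
        Or.imp_right (Or.imp_left fun h => hQ h)
      -- a vertex of the remainder that is present is a vertex of `Q`
      have redQ : ∀ a, (a ∈ L.B ∨ a ∈ Q.support ∨ a ∈ L.path.support) → a ∈ L.H →
          a ∈ Q.support := by
        rintro a (ha | ha | ha) haH
        · exact (Set.disjoint_left.mp L.disj ha haH).elim
        · exact ha
        · rw [L.H_path a haH ha, hx]
          exact Q.origin_mem_support
      intro a b ha hb hab
      have ha' := red a ha
      have hb' := red b hb
      rcases L.edges a b (redL a ha') (redL b hb') hab with ⟨h1, h2⟩ | ⟨h1, h2⟩ | ⟨h1, h2⟩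
      · exact Or.inl ⟨0, h1, h2⟩
      · rcases Q.edges_within a b (redQ a ha' h1) (redQ b hb' h2) hab with
          ⟨i, h⟩ | h | ⟨i, h⟩
        · exact Or.inl ⟨i.succ, h⟩
        · exact Or.inr (Or.inl h)
        · exact Or.inr (Or.inr ⟨i.succ, h⟩)
      · exact Or.inr (Or.inr ⟨0, (mem_support_copy _ hx).mpr h1, (mem_support_copy _ hx).mpr h2⟩)
    odd_path := Fin.cases L.parities.1 (fun i => Q.odd_path i)
    even_path := Fin.cases L.parities.2 (fun i => Q.even_path i)
    last_connected := Q.last_connected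
    block_chrom := Fin.cases L.B_chrom (fun i => Q.block_chrom i) }

lemma PCP.cons_support {ℓ : ℕ} {A : Set V} {x : V} (L : Link G A x) (Q : PCP G ℓ)
    (hQ : Q.support ⊆ L.H) (hx : L.x' = Q.x 0) : (PCP.cons L Q hQ hx).support ⊆ A := by
  intro a ha
  rcases PCP.mem_support.mp ha with ⟨i, hi⟩ | h | ⟨i, hi⟩
  · revert hi
    refine Fin.cases ?_ (fun i => ?_) i
    · exact fun hi => L.B_sub hi
    · exact fun hi => L.H_sub (hQ (PCP.mem_support.mpr (Or.inl ⟨i, hi⟩)))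
  · exact L.H_sub (hQ (PCP.mem_support.mpr (Or.inr (Or.inl h))))
  · revert hi
    refine Fin.cases ?_ (fun i => ?_) i
    · exact fun hi => L.path_sub a ((mem_support_copy _ hx).mp hi)
    · exact fun hi => L.H_sub (hQ (PCP.mem_support.mpr (Or.inr (Or.inr ⟨i, hi⟩))))

lemma le_of_le_iterate (n : ℕ) (c : ℝ) (h : (18 : ℝ) ≤ (fun x : ℝ => x / 2 - 8)^[n] c) :
    18 ≤ c := by
  induction n generalizing c with
  | zero => exact h
  | succ n ih =>
    have := ih _ h
    dsimp only at this
    linarith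

/-- Iterating the main step inside a connected set, without reference to any levelling of the
ambient graph. -/
lemma exists_pcp [Finite V] (h3 : G.CliqueFree 3) (h5 : NoInducedCycle G 5) (ℓ : ℕ) (c : ℝ)
    (hc : ∀ j < ℓ, (18 : ℝ) ≤ (fun x : ℝ => x / 2 - 8)^[j] c) {A : Set V}
    (hA : (G.induce A).Connected) {x : V} (hx : x ∈ A) (hχ : c ≤ chiSet G A) :
    ∃ P : PCP G ℓ, P.support ⊆ A ∧ P.x 0 = x ∧
      (fun x : ℝ => x / 2 - 8)^[ℓ] c ≤ (P.leftovers : ℝ) := by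
  induction ℓ generalizing c A x with
  | zero =>
    refine ⟨PCP.base hA hx, ?_, rfl, hχ⟩
    intro a ha
    rcases PCP.mem_support.mp ha with ⟨i, _⟩ | h | ⟨i, _⟩
    exacts [i.elim0, h, i.elim0]
  | succ ℓ ih =>
    have h18 : (18 : ℝ) ≤ c := hc 0 (Nat.succ_pos _)
    obtain ⟨L, hLχ⟩ := exists_link h3 h5 hA hx (by exact_mod_cast h18.trans hχ)
    have hLχ' : c / 2 - 8 ≤ (chiSet G L.H : ℝ) := by
      have : (chiSet G A : ℝ) ≤ 2 * chiSet G L.H + 12 := by exact_mod_cast hLχ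
      linarith
    obtain ⟨Q, hQ, hQx, hQχ⟩ := ih (c / 2 - 8) (fun j hj => hc (j + 1) (by omega)) L.H_conn
      L.x'_mem hLχ'
    exact ⟨PCP.cons L Q hQ hQx.symm, PCP.cons_support L Q hQ hQx.symm, rfl, hQχ⟩

end Assembly

/-- In a connected graph of `C_{3,5,2k≥6}`, if `χ(N_k) ≥ δ + 1` and
`h^{(ℓ-1)}(δ) ≥ 18` (where `h(x) = x/2 - 8`), then there is a rooted PCP of order `ℓ`
in the level `N_k` with leftovers at least `h^{(ℓ)}(δ)`. -/
theorem rooted_pcp_exists (V : Type) [Fintype V] (G : SimpleGraph V)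
    (hconn : G.Connected) (h3 : G.CliqueFree 3) (h5 : NoInducedCycle G 5)
    (heven : ∀ n : ℕ, 6 ≤ n → Even n → NoInducedCycle G n)
    (v : V) (k ℓ δ : ℕ) (hk : 0 < k) (hℓ : 0 < ℓ) (hδpos : 0 < δ)
    (hχ : δ + 1 ≤ chiSet G (level G v k))
    (hit : (18 : ℝ) ≤ (fun x : ℝ => x / 2 - 8)^[ℓ - 1] (δ : ℝ)) :
    ∃ P : PCP G ℓ, P.IsRootedInLevel v k ∧
      (fun x : ℝ => x / 2 - 8)^[ℓ] (δ : ℝ) ≤ (P.leftovers : ℝ) := by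
  classical
  have h18 := le_of_le_iterate _ _ hit
  have hc : ∀ j < ℓ, (18 : ℝ) ≤ (fun x : ℝ => x / 2 - 8)^[j] (δ : ℝ) := by
    intro j hj
    refine le_of_le_iterate (ℓ - 1 - j) _ ?_
    rw [← Function.iterate_add_apply, show ℓ - 1 - j + j = ℓ - 1 by omega]
    exact hit
  obtain ⟨C, hCN, hC, hCχ, -⟩ := exists_component (Nat.succ_pos δ) hχ
  obtain ⟨⟨c, hcC⟩⟩ := hC.nonempty
  -- the root is the parent of a vertex of the component `C`
  obtain ⟨u, huN, huc⟩ : ∃ u ∈ level G v (k - 1), G.Adj u c := by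
    have hdist : G.dist v c = k := (hCN hcC).2
    obtain ⟨p, hp⟩ := hconn.exists_walk_length_eq_dist v c
    have hnil : ¬ p.Nil := by
      intro hn
      have := Walk.length_eq_zero_iff.mpr hn
      omega
    have hadj := p.adj_penultimate hnil
    refine ⟨p.penultimate, ⟨hconn.preconnected _ _, ?_⟩, hadj⟩
    have h1 := G.dist_le p.dropLast
    have h2 := hadj.diff_dist_adj (u := v)
    have h3 : p.dropLast.length = p.length - 1 := by simp
    omega
  -- one colour makes the origin the only neighbour of the root
  obtain ⟨a, haC, H, hHC, hua, huH, -, ⟨b, hb, hab⟩, hH, hHχ⟩ := pull h3 hC hcC huc hδpos hCχ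
  obtain ⟨P, hPA, hPx, hPχ⟩ := exists_pcp h3 h5 ℓ δ hc (connected_insert hH hb hab)
    (Set.mem_insert a H) (by exact_mod_cast hHχ.trans (chiSet_mono (Set.subset_insert a H)))
  refine ⟨P, ⟨fun w hw => ?_, u, huN, ?_, ?_⟩, hPχ⟩
  · rcases hPA hw with rfl | hwH
    exacts [hCN haC, hCN (hHC hwH)]
  · rw [PCP.origin, hPx]
    exact hua
  · intro w hw hne
    rw [PCP.origin, hPx] at hne
    rcases hPA hw with rfl | hwH
    exacts [(hne rfl).elim, huH w hwH]
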